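/- Let χ : [0,∞) → [0,∞) satisfy χ(t) = 0 for t ≤ (1−δ)r²c², χ(t) = t for t ≥ r²c², with χ linear increasing in between (as defined by the truncation with parameters c ≥ 0, r > 0, 0 < δ < 1). Then for every 0 ≤ w ≤ 1 and every t ≥ 0, χ(w²t) ≤ w²·χ(t). -/

import Mathlib

/-- The Lipschitz truncation surrogate `χ` used in the SAF concentration
argument. -/
noncomputable def chi (c δ r : ℝ) (t : ℝ) : ℝ :=
  if r ^ 2 * c ^ 2 < t then t
  else if (1 - δ) * r ^ 2 * c ^ 2 ≤ t then (1 / δ) * (t - r ^ 2 * c ^ 2) + r ^ 2 * c ^ 2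
  else 0

/-!
For `0 < δ ≤ 1` the truncation `χ` is the lattice polynomial `max 0 (min t ℓ(t))`, where `ℓ` is the
line of slope `1 / δ` through `(r²c², r²c²)`. The three functions `0`, `t` and `ℓ` are convex and
nonpositive at the origin, so each satisfies `f (s t) ≤ s f t` for `0 ≤ s ≤ 1`. Unlike convexity,
which `χ` does not have, this property survives taking minima as well as maxima.
-/

/-- Starshaped functions, whose epigraph is star-convex at the origin: contracting the argument by
a factor `s ∈ [0, 1]` bounds the value by `s` times the original one. -/
def IsStarshaped (𝕜 : Type*) {E β : Type*} [Zero 𝕜] [One 𝕜] [LE 𝕜] [SMul 𝕜 E] [SMul 𝕜 β] [LE β]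
    (f : E → β) : Prop :=
  ∀ ⦃s : 𝕜⦄, 0 ≤ s → s ≤ 1 → ∀ x, f (s • x) ≤ s • f x

section Starshaped

variable {𝕜 E β : Type*} [Zero 𝕜] [One 𝕜] [Preorder 𝕜] [SMul 𝕜 E] [SMul 𝕜 β] [LinearOrder β]
  [PosSMulMono 𝕜 β] {f g : E → β}

theorem IsStarshaped.sup (hf : IsStarshaped 𝕜 f) (hg : IsStarshaped 𝕜 g) :
    IsStarshaped 𝕜 (f ⊔ g) := fun s hs₀ hs₁ x ↦
  calc f (s • x) ⊔ g (s • x) ≤ s • f x ⊔ s • g x := sup_le_sup (hf hs₀ hs₁ x) (hg hs₀ hs₁ x)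
    _ = s • (f x ⊔ g x) := ((monotone_smul_left_of_nonneg hs₀).map_sup _ _).symm

theorem IsStarshaped.inf (hf : IsStarshaped 𝕜 f) (hg : IsStarshaped 𝕜 g) :
    IsStarshaped 𝕜 (f ⊓ g) := fun s hs₀ hs₁ x ↦
  calc f (s • x) ⊓ g (s • x) ≤ s • f x ⊓ s • g x := inf_le_inf (hf hs₀ hs₁ x) (hg hs₀ hs₁ x)
    _ = s • (f x ⊓ g x) := ((monotone_smul_left_of_nonneg hs₀).map_inf _ _).symm

end Starshaped

theorem isStarshaped_of_convexOn {𝕜 E β : Type*} [Ring 𝕜] [PartialOrder 𝕜] [IsOrderedRing 𝕜]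
    [AddCommMonoid E] [Module 𝕜 E] [AddCommMonoid β] [PartialOrder β] [IsOrderedAddMonoid β]
    [Module 𝕜 β] [PosSMulMono 𝕜 β] {f : E → β} (hf : ConvexOn 𝕜 Set.univ f) (hf₀ : f 0 ≤ 0) :
    IsStarshaped 𝕜 f := by
  intro s hs₀ hs₁ x
  have hs₁' : 0 ≤ 1 - s := sub_nonneg.2 hs₁
  calc f (s • x) = f (s • x + (1 - s) • 0) := by rw [smul_zero, add_zero]
    _ ≤ s • f x + (1 - s) • f 0 :=
      hf.2 (Set.mem_univ x) (Set.mem_univ 0) hs₀ hs₁' (add_sub_cancel s 1)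
    _ ≤ s • f x := add_le_of_nonpos_right (smul_nonpos_of_nonneg_of_nonpos hs₁' hf₀)

theorem isStarshaped_mul_add {𝕜 : Type*} [CommRing 𝕜] [PartialOrder 𝕜] [IsOrderedRing 𝕜]
    (k : 𝕜) {b : 𝕜} (hb : b ≤ 0) : IsStarshaped 𝕜 fun t : 𝕜 ↦ k * t + b :=
  isStarshaped_of_convexOn (((LinearMap.mulLeft 𝕜 k).convexOn convex_univ).add_const b)
    (by simpa using hb)

theorem chi_eq_max_min (c r : ℝ) {δ : ℝ} (hδ₀ : 0 < δ) (hδ₁ : δ ≤ 1) (t : ℝ) :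
    chi c δ r t = max 0 (min t (δ⁻¹ * t + (1 - δ⁻¹) * (r ^ 2 * c ^ 2))) := by
  have hA : 0 ≤ r ^ 2 * c ^ 2 := by positivity
  rw [chi, mul_assoc (1 - δ)]
  generalize r ^ 2 * c ^ 2 = A at hA ⊢
  have line_sub_self : δ⁻¹ * t + (1 - δ⁻¹) * A - t = (δ⁻¹ - 1) * (t - A) := by ring
  have line_eq : δ⁻¹ * t + (1 - δ⁻¹) * A = δ⁻¹ * (t - (1 - δ) * A) := by field_simp; ring
  have slope_sub_one_nonneg : 0 ≤ δ⁻¹ - 1 := sub_nonneg.2 ((one_le_inv₀ hδ₀).2 hδ₁)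
  split_ifs with above middle
  · have self_le_line : t ≤ δ⁻¹ * t + (1 - δ⁻¹) * A := by
      rw [← sub_nonneg, line_sub_self]
      exact mul_nonneg slope_sub_one_nonneg (sub_nonneg.2 above.le)
    rw [min_eq_left self_le_line, max_eq_right (hA.trans above.le)]
  · have line_le_self : δ⁻¹ * t + (1 - δ⁻¹) * A ≤ t := by
      rw [← sub_nonpos, line_sub_self]
      exact mul_nonpos_of_nonneg_of_nonpos slope_sub_one_nonneg (sub_nonpos.2 (not_lt.1 above))
    have line_nonneg : 0 ≤ δ⁻¹ * t + (1 - δ⁻¹) * A := by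
      rw [line_eq]
      exact mul_nonneg (inv_nonneg.2 hδ₀.le) (sub_nonneg.2 middle)
    rw [min_eq_right line_le_self, max_eq_right line_nonneg]
    ring
  · have line_nonpos : δ⁻¹ * t + (1 - δ⁻¹) * A ≤ 0 := by
      rw [line_eq]
      exact mul_nonpos_of_nonneg_of_nonpos (inv_nonneg.2 hδ₀.le)
        (sub_nonpos.2 (not_le.1 middle).le)
    rw [max_eq_left (min_le_of_right_le line_nonpos)]

theorem chi_scaling_general (c r : ℝ) {δ : ℝ} (hδ₀ : 0 < δ) (hδ₁ : δ ≤ 1) :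
    IsStarshaped ℝ (chi c δ r) := by
  have intercept_nonpos : (1 - δ⁻¹) * (r ^ 2 * c ^ 2) ≤ 0 :=
    mul_nonpos_of_nonpos_of_nonneg (sub_nonpos.2 ((one_le_inv₀ hδ₀).2 hδ₁)) (by positivity)
  have zero_starshaped : IsStarshaped ℝ (0 : ℝ → ℝ) :=
    isStarshaped_of_convexOn (convexOn_const 0 convex_univ) le_rfl
  have id_starshaped : IsStarshaped ℝ (id : ℝ → ℝ) :=
    isStarshaped_of_convexOn (convexOn_id convex_univ) le_rfl
  rw [funext (chi_eq_max_min c r hδ₀ hδ₁)]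
  exact zero_starshaped.sup (id_starshaped.inf (isStarshaped_mul_add δ⁻¹ intercept_nonpos))

/-- Scaling inequality `χ(w²t) ≤ w²χ(t)` for `0 ≤ w ≤ 1` and `t ≥ 0`. -/
theorem chi_scaling (c δ r : ℝ) (hc : 0 ≤ c) (hδ0 : 0 < δ) (hδ1 : δ < 1)
    (hr : 0 < r) (w t : ℝ) (hw0 : 0 ≤ w) (hw1 : w ≤ 1) (ht : 0 ≤ t) :
    chi c δ r (w ^ 2 * t) ≤ w ^ 2 * chi c δ r t :=
  chi_scaling_general c r hδ0 hδ1.le (sq_nonneg w) (pow_le_one₀ hw0 hw1) t
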